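/- Separation theorem, converse part under the channel semi-strong converse property (Theorem 6.7, part 2, channel version, spectral form). Let V = {Vⁿ} be a general source and W = {Wⁿ} a general channel with the property that for every channel input X = {Xⁿ} and every strictly increasing sequence of positive integers n₁ < n₂ < … it holds that p-liminf_{i→∞} (1/n_i) log( W^{n_i}(Y^{n_i}|X^{n_i})/P_{Y^{n_i}}(Y^{n_i}) ) ≤ sup_X I_(X;Y). If V is transmissible over W, then H̄(V) ≤ sup_X I_(X;Y). -/

import Mathlib

/-!
If `b < H̄(V)`, then along some subsequence of blocklengths the source words of probability at most
`exp (-n b)` keep total mass at least some `δ > 0`. Conditioning the source on these words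
multiplies the error probability of a code by at most `1/δ` and leaves a source whose probabilities
are at most `exp (-n b) / δ`. Feed the channel with the encoded conditioned source. If `a < b`, the
pairs `(x, y)` with information density below `a` satisfy `W(y|x) ≤ exp (n a) P_Y(y)`; those decoded
correctly have total mass at most `exp (-n (b - a)) / δ`, and those decoded incorrectly are
controlled by the error probability. Hence `a` is at most the p-liminf along this subsequence for
this input, a quantity that the semi-strong converse property bounds by `sup_X I_(X;Y)`.
-/

open Filter Real Topology

namespace ISC

/-- Words of length `n` over alphabet `A`. -/
abbrev Word (A : Type*) (n : ℕ) : Type _ := Fin n → A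

/-- `p` is a probability mass function. -/
def IsPMF {α : Type*} (p : α → ℝ) : Prop :=
  (∀ a, 0 ≤ p a) ∧ HasSum p 1

/-- Probability of the event `S` under the pmf `p`. -/
noncomputable def prob {α : Type*} (p : α → ℝ) (S : Set α) : ℝ :=
  ∑' a, S.indicator p a

/-- Output marginal `P_{Yⁿ}` of the channel `W` fed with the joint input law `P_{VⁿXⁿ}`. -/
noncomputable def outDist {𝒱 𝒳 𝒴 : Type*} {n : ℕ}
    (PVX : Word 𝒱 n × Word 𝒳 n → ℝ) (W : Word 𝒳 n → Word 𝒴 n → ℝ)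
    (y : Word 𝒴 n) : ℝ :=
  ∑' vx : Word 𝒱 n × Word 𝒳 n, PVX vx * W vx.2 y

/-- Joint law of `(Vⁿ, Xⁿ, Yⁿ)`: `P_{VⁿXⁿ}(v,x) · Wⁿ(y|x)`. -/
noncomputable def jointLaw {𝒱 𝒳 𝒴 : Type*} {n : ℕ}
    (PVX : Word 𝒱 n × Word 𝒳 n → ℝ) (W : Word 𝒳 n → Word 𝒴 n → ℝ) :
    Word 𝒱 n × Word 𝒳 n × Word 𝒴 n → ℝ :=
  fun z => PVX (z.1, z.2.1) * W z.2.1 z.2.2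

/-- The joint input law `P_{VⁿXⁿ}` induced by the deterministic encoder `φ`:
`P_{Vⁿ}(v) 1{x = φ(v)}`. -/
noncomputable def codeInput {𝒱 𝒳 : Type*} [DecidableEq 𝒳] {n : ℕ} (PV : Word 𝒱 n → ℝ)
    (φ : Word 𝒱 n → Word 𝒳 n) : Word 𝒱 n × Word 𝒳 n → ℝ :=
  fun vx => if vx.2 = φ vx.1 then PV vx.1 else 0

/-- Error probability `εₙ` of the joint source-channel code `(φ, ψ)`. -/
noncomputable def errProb {𝒱 𝒳 𝒴 : Type*} {n : ℕ}
    (PV : Word 𝒱 n → ℝ) (W : Word 𝒳 n → Word 𝒴 n → ℝ)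
    (φ : Word 𝒱 n → Word 𝒳 n) (ψ : Word 𝒴 n → Word 𝒱 n) : ℝ :=
  ∑' v, PV v * prob (W (φ v)) {y | ψ y ≠ v}

/-- `V` is transmissible over `W`. -/
def Transmissible {𝒱 𝒳 𝒴 : Type*} (PV : (n : ℕ) → Word 𝒱 n → ℝ)
    (W : (n : ℕ) → Word 𝒳 n → Word 𝒴 n → ℝ) : Prop :=
  ∃ (φ : (n : ℕ) → Word 𝒱 n → Word 𝒳 n) (ψ : (n : ℕ) → Word 𝒴 n → Word 𝒱 n),
    Tendsto (fun n => errProb (PV n) (W n) (φ n) (ψ n)) atTop (nhds 0)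

/-- Output marginal of the channel `W` for an input distribution `P_{Xⁿ}`. -/
noncomputable def outDistX {𝒳 𝒴 : Type*} {n : ℕ}
    (PX : Word 𝒳 n → ℝ) (W : Word 𝒳 n → Word 𝒴 n → ℝ) (y : Word 𝒴 n) : ℝ :=
  ∑' x : Word 𝒳 n, PX x * W x y

/-- Joint law of `(Xⁿ, Yⁿ)`: `P_{Xⁿ}(x) · Wⁿ(y|x)`. -/
noncomputable def jointXY {𝒳 𝒴 : Type*} {n : ℕ}
    (PX : Word 𝒳 n → ℝ) (W : Word 𝒳 n → Word 𝒴 n → ℝ) :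
    Word 𝒳 n × Word 𝒴 n → ℝ :=
  fun z => PX z.1 * W z.1 z.2

/-- Limit superior in probability of a sequence of random variables `Z i`
distributed according to the pmfs `p i`. -/
noncomputable def plimsup {α : ℕ → Type*} (p : (i : ℕ) → α i → ℝ)
    (Z : (i : ℕ) → α i → ℝ) : EReal :=
  sInf {β : EReal |
    Tendsto (fun i => prob (p i) {a | β < (Z i a : EReal)}) atTop (nhds 0)}

/-- Limit inferior in probability of a sequence of random variables `Z i`
distributed according to the pmfs `p i`. -/
noncomputable def pliminf {α : ℕ → Type*} (p : (i : ℕ) → α i → ℝ)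
    (Z : (i : ℕ) → α i → ℝ) : EReal :=
  sSup {β : EReal |
    Tendsto (fun i => prob (p i) {a | (Z i a : EReal) < β}) atTop (nhds 0)}

/-- Spectral sup-entropy rate `H̄(V)`. -/
noncomputable def Hbar {𝒱 : Type*} (PV : (n : ℕ) → Word 𝒱 n → ℝ) : EReal :=
  plimsup (fun n => PV n) (fun n v => (1 / (n : ℝ)) * Real.log (1 / PV n v))

/-- Spectral inf-entropy rate `H_(V)`. -/
noncomputable def Hlow {𝒱 : Type*} (PV : (n : ℕ) → Word 𝒱 n → ℝ) : EReal :=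
  pliminf (fun n => PV n) (fun n v => (1 / (n : ℝ)) * Real.log (1 / PV n v))

/-- Spectral inf-information rate `I_(X;Y)` of the channel `W` with input `X`. -/
noncomputable def Ilow {𝒳 𝒴 : Type*} (PX : (n : ℕ) → Word 𝒳 n → ℝ)
    (W : (n : ℕ) → Word 𝒳 n → Word 𝒴 n → ℝ) : EReal :=
  pliminf (fun n => jointXY (PX n) (W n))
    (fun n z => (1 / (n : ℝ)) * Real.log (W n z.1 z.2 / outDistX (PX n) (W n) z.2))

/-- Spectral sup-information rate `Ī(X;Y)` of the channel `W` with input `X`. -/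
noncomputable def Ihigh {𝒳 𝒴 : Type*} (PX : (n : ℕ) → Word 𝒳 n → ℝ)
    (W : (n : ℕ) → Word 𝒳 n → Word 𝒴 n → ℝ) : EReal :=
  plimsup (fun n => jointXY (PX n) (W n))
    (fun n z => (1 / (n : ℝ)) * Real.log (W n z.1 z.2 / outDistX (PX n) (W n) z.2))

/-- `sup_X I_(X;Y)`: the supremum over all channel inputs. -/
noncomputable def supIlow {𝒳 𝒴 : Type*}
    (W : (n : ℕ) → Word 𝒳 n → Word 𝒴 n → ℝ) : EReal :=
  ⨆ PX : {PX : (n : ℕ) → Word 𝒳 n → ℝ // ∀ n, IsPMF (PX n)}, Ilow PX.1 W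

section PMF

variable {α β : Type*} {p q : α → ℝ} {S T U : Set α}

theorem IsPMF.nonneg (hp : IsPMF p) (a : α) : 0 ≤ p a :=
  hp.1 a

theorem IsPMF.summable (hp : IsPMF p) : Summable p :=
  hp.2.summable

theorem prob_nonneg (hp : ∀ a, 0 ≤ p a) (S : Set α) : 0 ≤ prob p S :=
  tsum_nonneg fun _ => Set.indicator_nonneg (fun a _ => hp a) _

theorem IsPMF.prob_mono_of_ne_zero (hp : IsPMF p) (h : ∀ a ∈ S, p a ≠ 0 → a ∈ T) :
    prob p S ≤ prob p T := by
  refine (hp.summable.indicator S).tsum_le_tsum (fun a => ?_) (hp.summable.indicator T)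
  by_cases hS : a ∈ S <;> by_cases hT : a ∈ T <;> grind [Set.indicator, hp.nonneg a]

theorem IsPMF.prob_mono (hp : IsPMF p) (h : S ⊆ T) : prob p S ≤ prob p T :=
  hp.prob_mono_of_ne_zero fun _ ha _ => h ha

theorem IsPMF.prob_le_one (hp : IsPMF p) (S : Set α) : prob p S ≤ 1 := by
  simpa [prob, hp.2.tsum_eq] using hp.prob_mono S.subset_univ

theorem IsPMF.prob_le_add (hp : IsPMF p) (h : S ⊆ T ∪ U) : prob p S ≤ prob p T + prob p U := by
  have hT := hp.summable.indicator T
  have hU := hp.summable.indicator U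
  unfold prob
  rw [← hT.tsum_add hU]
  refine (hp.summable.indicator S).tsum_le_tsum (fun a => ?_) (hT.add hU)
  by_cases hT : a ∈ T <;> by_cases hU : a ∈ U <;> by_cases hS : a ∈ S <;>
    grind [Set.indicator, hp.nonneg a]

theorem prob_le_mul_prob (hp : Summable p) (hq : Summable q) {c : ℝ}
    (h : ∀ a ∈ S, p a ≤ c * q a) : prob p S ≤ c * prob q S := by
  rw [prob, prob, ← tsum_mul_left]
  refine (hp.indicator S).tsum_le_tsum (fun a => ?_) ((hq.indicator S).mul_left c)
  by_cases ha : a ∈ S <;> simp [ha, h]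

theorem IsPMF.summable_mul (hp : IsPMF p) {f : α → ℝ} (hf₀ : ∀ a, 0 ≤ f a) (hf₁ : ∀ a, f a ≤ 1) :
    Summable fun a => p a * f a :=
  hp.summable.of_nonneg_of_le (fun a => mul_nonneg (hp.nonneg a) (hf₀ a))
    fun a => mul_le_of_le_one_right (hp.nonneg a) (hf₁ a)

/-- The pushforward of the mass function `p` along `φ`: the law of `φ(V)` when `V` has law `p`. -/
noncomputable def push (φ : α → β) (p : α → ℝ) (b : β) : ℝ :=
  prob p (φ ⁻¹' {b})

theorem hasSum_push_mul (φ : α → β) {f : β → ℝ} {s : ℝ} (h : HasSum (fun a => p a * f (φ a)) s) :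
    HasSum (fun b => push φ p b * f b) s := by
  have hfiber : ∀ b, ∑' a : φ ⁻¹' {b}, p a * f (φ a) = push φ p b * f b := fun b => by
    rw [push, prob, ← tsum_subtype, ← tsum_mul_right]
    exact tsum_congr fun a => by rw [show φ a = b from a.2]
  simpa only [hfiber] using h.tsum_fiberwise φ

theorem IsPMF.push (hp : IsPMF p) (φ : α → β) : IsPMF (push φ p) :=
  ⟨fun _ => prob_nonneg hp.nonneg _, by
    simpa using hasSum_push_mul φ (f := fun _ => 1) (by simpa using hp.2)⟩

open Classical in
/-- The law `p` conditioned on the event `S`. If `S` is null it is `p` itself, so that conditioning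
a pmf always gives a pmf. -/
noncomputable def condLaw (p : α → ℝ) (S : Set α) : α → ℝ :=
  if prob p S = 0 then p else fun a => S.indicator p a / prob p S

theorem IsPMF.condLaw (hp : IsPMF p) (S : Set α) : IsPMF (condLaw p S) := by
  unfold ISC.condLaw
  split_ifs with h
  · exact hp
  · refine ⟨fun a => div_nonneg (Set.indicator_nonneg (fun a _ => hp.nonneg a) a)
      (prob_nonneg hp.nonneg S), ?_⟩
    have hsum : HasSum (S.indicator p) (prob p S) := (hp.summable.indicator S).hasSum
    simpa [h] using hsum.div_const (prob p S)

theorem IsPMF.condLaw_le (hp : IsPMF p) {δ : ℝ} (hδ : 0 < δ) (hS : δ ≤ prob p S) (a : α) :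
    ISC.condLaw p S a ≤ δ⁻¹ * S.indicator p a := by
  rw [ISC.condLaw, if_neg (hδ.trans_le hS).ne', div_eq_inv_mul]
  gcongr
  exact Set.indicator_nonneg (fun a _ => hp.nonneg a) a

end PMF

section Channel

variable {𝒱 𝒳 𝒴 : Type*} {n : ℕ} {PV Q : Word 𝒱 n → ℝ} {PX : Word 𝒳 n → ℝ}
  {W : Word 𝒳 n → Word 𝒴 n → ℝ}

theorem IsPMF.jointXY (hX : IsPMF PX) (hW : ∀ x, IsPMF (W x)) : IsPMF (jointXY PX W) := by
  have hnonneg : ∀ z, 0 ≤ ISC.jointXY PX W z := fun z =>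
    mul_nonneg (hX.nonneg z.1) ((hW z.1).nonneg z.2)
  have hfiber : ∀ x, HasSum (fun y => ISC.jointXY PX W (x, y)) (PX x) := fun x => by
    simpa [ISC.jointXY] using (hW x).2.mul_left (PX x)
  have hsummable : Summable (ISC.jointXY PX W) :=
    (summable_prod_of_nonneg hnonneg).2
      ⟨fun x => (hfiber x).summable, by simpa only [(hfiber _).tsum_eq] using hX.summable⟩
  refine ⟨hnonneg, ?_⟩
  rw [← hX.2.tsum_eq, ← tsum_congr fun x => (hfiber x).tsum_eq, ← hsummable.tsum_prod]
  exact hsummable.hasSum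

theorem hasSum_mul_prob_jointXY (hX : IsPMF PX) (hW : ∀ x, IsPMF (W x))
    (S : Set (Word 𝒳 n × Word 𝒴 n)) :
    HasSum (fun x => PX x * prob (W x) (Prod.mk x ⁻¹' S)) (prob (jointXY PX W) S) := by
  have hsum := (hX.jointXY hW).summable.indicator S
  have hfiber : ∀ x, ∑' y, S.indicator (jointXY PX W) (x, y) =
      PX x * prob (W x) (Prod.mk x ⁻¹' S) := fun x => by
    rw [prob, ← tsum_mul_left]
    refine tsum_congr fun y => ?_
    by_cases hy : (x, y) ∈ S <;> simp [jointXY, hy]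
  have hprod := hsum.hasSum.prod_fiberwise fun x => (hsum.prod_factor x).hasSum
  simp only [hfiber] at hprod
  exact hprod

theorem push_snd_jointXY (PX : Word 𝒳 n → ℝ) (W : Word 𝒳 n → Word 𝒴 n → ℝ) :
    push Prod.snd (jointXY PX W) = outDistX PX W := by
  ext y
  rw [push, prob, outDistX, ← (Prod.mk_left_injective y).tsum_eq]
  · simp [jointXY]
  · rintro ⟨x, y'⟩ hz
    have hy : (x, y') ∈ Prod.snd ⁻¹' {y} := Set.support_indicator_subset hz
    obtain rfl : y' = y := hy
    exact ⟨x, rfl⟩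

theorem IsPMF.outDistX (hX : IsPMF PX) (hW : ∀ x, IsPMF (W x)) : IsPMF (outDistX PX W) :=
  push_snd_jointXY PX W ▸ (hX.jointXY hW).push Prod.snd

theorem mul_le_outDistX (hX : IsPMF PX) (hW : ∀ x, IsPMF (W x)) (x : Word 𝒳 n) (y : Word 𝒴 n) :
    PX x * W x y ≤ outDistX PX W y :=
  ((hX.jointXY hW).summable.comp_injective (Prod.mk_left_injective y)).le_tsum x
    fun x' _ => (hX.jointXY hW).nonneg (x', y)

theorem summable_mul_prob_ne (hV : IsPMF PV) (hW : ∀ x, IsPMF (W x)) (φ : Word 𝒱 n → Word 𝒳 n)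
    (ψ : Word 𝒴 n → Word 𝒱 n) : Summable fun v => PV v * prob (W (φ v)) {y | ψ y ≠ v} :=
  hV.summable_mul (fun _ => prob_nonneg (hW _).nonneg _) fun _ => (hW _).prob_le_one _

theorem errProb_le_mul_errProb (hQ : IsPMF Q) (hV : IsPMF PV) (hW : ∀ x, IsPMF (W x))
    (φ : Word 𝒱 n → Word 𝒳 n) (ψ : Word 𝒴 n → Word 𝒱 n) {c : ℝ} (hle : ∀ v, Q v ≤ c * PV v) :
    errProb Q W φ ψ ≤ c * errProb PV W φ ψ := by
  rw [errProb, errProb, ← tsum_mul_left]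
  refine (summable_mul_prob_ne hQ hW φ ψ).tsum_le_tsum (fun v => ?_)
    ((summable_mul_prob_ne hV hW φ ψ).mul_left c)
  rw [← mul_assoc]
  exact mul_le_mul_of_nonneg_right (hle v) (prob_nonneg (hW _).nonneg _)

theorem hasSum_mul_prob_jointXY_push (hQ : IsPMF Q) (hW : ∀ x, IsPMF (W x))
    (φ : Word 𝒱 n → Word 𝒳 n) (S : Set (Word 𝒳 n × Word 𝒴 n)) :
    HasSum (fun v => Q v * prob (W (φ v)) (Prod.mk (φ v) ⁻¹' S))
      (prob (jointXY (push φ Q) W) S) := by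
  have hsum := (hQ.summable_mul (f := fun v => prob (W (φ v)) (Prod.mk (φ v) ⁻¹' S))
    (fun _ => prob_nonneg (hW _).nonneg _) fun _ => (hW _).prob_le_one _).hasSum
  have hpush := hasSum_push_mul φ (f := fun x => prob (W x) (Prod.mk x ⁻¹' S)) hsum
  rwa [hpush.unique (hasSum_mul_prob_jointXY (hQ.push φ) hW S)] at hsum

/-- The decoding regions `ψ ⁻¹' {v}` are disjoint, so correctly decoded pairs with
`W(y|x) ≤ c P_Y(y)` contribute at most `K * c` times the total mass of the output law. -/
theorem prob_jointXY_push_le_errProb_add (hQ : IsPMF Q) (hW : ∀ x, IsPMF (W x))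
    (φ : Word 𝒱 n → Word 𝒳 n) (ψ : Word 𝒴 n → Word 𝒱 n) {K c : ℝ} (hc : 0 ≤ c)
    (hK : ∀ v, Q v ≤ K) :
    prob (jointXY (push φ Q) W) {z | W z.1 z.2 ≤ c * outDistX (push φ Q) W z.2} ≤
      errProb Q W φ ψ + K * c := by
  set PY := outDistX (push φ Q) W
  set S : Set (Word 𝒳 n × Word 𝒴 n) := {z | W z.1 z.2 ≤ c * PY z.2}
  have hY : IsPMF PY := (hQ.push φ).outDistX hW
  have hcorrect : ∀ v, prob (W (φ v)) (Prod.mk (φ v) ⁻¹' S ∩ ψ ⁻¹' {v}) ≤ c * push ψ PY v :=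
    fun v => calc
      _ ≤ c * prob PY (Prod.mk (φ v) ⁻¹' S ∩ ψ ⁻¹' {v}) :=
        prob_le_mul_prob (hW _).summable hY.summable fun _ hy => hy.1
      _ ≤ c * push ψ PY v := by
        gcongr
        exact hY.prob_mono Set.inter_subset_right
  have hsplit : ∀ v, prob (W (φ v)) (Prod.mk (φ v) ⁻¹' S) ≤
      prob (W (φ v)) {y | ψ y ≠ v} + c * push ψ PY v := fun v =>
    ((hW _).prob_le_add fun y hy => (ne_or_eq (ψ y) v).imp_right (And.intro hy)).trans
      (add_le_add_right (hcorrect v) _)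
  refine hasSum_le (fun v => ?_) (hasSum_mul_prob_jointXY_push hQ hW φ S)
    ((summable_mul_prob_ne hQ hW φ ψ).hasSum.add
      (by simpa using (hY.push ψ).2.mul_left (K * c)))
  calc Q v * prob (W (φ v)) (Prod.mk (φ v) ⁻¹' S)
      ≤ Q v * prob (W (φ v)) {y | ψ y ≠ v} + Q v * (c * push ψ PY v) := by
        rw [← mul_add]
        exact mul_le_mul_of_nonneg_left (hsplit v) (hQ.nonneg v)
    _ ≤ Q v * prob (W (φ v)) {y | ψ y ≠ v} + K * c * push ψ PY v := by
        rw [mul_assoc K]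
        gcongr
        · exact mul_nonneg hc ((hY.push ψ).nonneg v)
        · exact hK v

end Channel

section LimitsInProbability

theorem exists_strictMono_le_of_not_tendsto_zero {u : ℕ → ℝ} (hu : ∀ n, 0 ≤ u n)
    (h : ¬ Tendsto u atTop (𝓝 0)) :
    ∃ δ > 0, ∃ ns : ℕ → ℕ, StrictMono ns ∧ 0 < ns 0 ∧ ∀ i, δ ≤ u (ns i) := by
  obtain ⟨δ, hδ, hfreq⟩ : ∃ δ > 0, ∃ᶠ n in atTop, δ ≤ u n := by
    contrapose! h
    refine Metric.tendsto_nhds.2 fun ε hε => ?_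
    filter_upwards [h ε hε] with n hn
    simpa [abs_of_nonneg (hu n)] using hn
  obtain ⟨ns, hns, hle⟩ :=
    extraction_of_frequently_atTop (hfreq.and_eventually (eventually_gt_atTop 0))
  exact ⟨δ, hδ, ns, hns, (hle 0).2, fun i => (hle i).1⟩

variable {α : ℕ → Type*} {p : (i : ℕ) → α i → ℝ} {Z : (i : ℕ) → α i → ℝ}

theorem exists_strictMono_le_prob_of_lt_plimsup (hp : ∀ i, IsPMF (p i)) {b : ℝ}
    (hb : b < plimsup p Z) :
    ∃ δ > 0, ∃ ns : ℕ → ℕ, StrictMono ns ∧ 0 < ns 0 ∧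
      ∀ i, δ ≤ prob (p (ns i)) {a | b < Z (ns i) a} := by
  refine exists_strictMono_le_of_not_tendsto_zero (u := fun n => prob (p n) {a | b < Z n a})
    (fun n => prob_nonneg (hp n).nonneg _) fun h => ?_
  exact hb.not_ge (sInf_le (by simpa using h))

theorem coe_le_pliminf {a : ℝ}
    (h : Tendsto (fun i => prob (p i) {x | Z i x < a}) atTop (𝓝 0)) : a ≤ pliminf p Z :=
  le_sSup (by simpa using h)

end LimitsInProbability

section Converse

variable {𝒱 𝒳 𝒴 : Type*} {n : ℕ}

/-- The normalized self-information `(1/n) log (1/P_{Vⁿ}(v))`, whose p-limsup is `H̄(V)`. -/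
noncomputable def entropyDensity (PV : Word 𝒱 n → ℝ) (v : Word 𝒱 n) : ℝ :=
  (1 / (n : ℝ)) * Real.log (1 / PV v)

/-- The normalized information density `(1/n) log (Wⁿ(y|x)/P_{Yⁿ}(y))`, whose p-liminf is
`I_(X;Y)`. -/
noncomputable def infoDensity (PX : Word 𝒳 n → ℝ) (W : Word 𝒳 n → Word 𝒴 n → ℝ)
    (z : Word 𝒳 n × Word 𝒴 n) : ℝ :=
  (1 / (n : ℝ)) * Real.log (W z.1 z.2 / outDistX PX W z.2)

/-- The inf-information rate `I_(X;Y)` evaluated along the blocklengths `ns 0, ns 1, …` only. -/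
noncomputable def subseqIlow (PX : (n : ℕ) → Word 𝒳 n → ℝ)
    (W : (n : ℕ) → Word 𝒳 n → Word 𝒴 n → ℝ) (ns : ℕ → ℕ) : EReal :=
  pliminf (fun i => jointXY (PX (ns i)) (W (ns i))) fun i => infoDensity (PX (ns i)) (W (ns i))

/-- The channel input obtained by encoding with `φ` the source conditioned on having normalized
self-information above `b`. -/
noncomputable def highEntropyInput (b : ℝ) (PV : Word 𝒱 n → ℝ) (φ : Word 𝒱 n → Word 𝒳 n) :
    Word 𝒳 n → ℝ :=
  push φ (condLaw PV {v | b < entropyDensity PV v})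

theorem IsPMF.highEntropyInput {PV : Word 𝒱 n → ℝ} (hV : IsPMF PV) (b : ℝ)
    (φ : Word 𝒱 n → Word 𝒳 n) : IsPMF (highEntropyInput b PV φ) :=
  (hV.condLaw _).push φ

theorem le_exp_of_lt_entropyDensity (hn : 0 < n) {PV : Word 𝒱 n → ℝ} {v : Word 𝒱 n} {b : ℝ}
    (hv : 0 ≤ PV v) (h : b < entropyDensity PV v) : PV v ≤ exp (-(n * b)) := by
  rcases hv.eq_or_lt with h₀ | hpos
  · exact h₀ ▸ (exp_pos _).le
  · rw [entropyDensity, one_div, one_div, Real.log_inv, lt_inv_mul_iff₀ (by positivity)] at h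
    rw [← Real.log_le_iff_le_exp hpos]
    linarith

theorem le_exp_mul_of_infoDensity_lt (hn : 0 < n) {PX : Word 𝒳 n → ℝ}
    {W : Word 𝒳 n → Word 𝒴 n → ℝ} {z : Word 𝒳 n × Word 𝒴 n} {a : ℝ} (hW : 0 < W z.1 z.2)
    (hY : 0 < outDistX PX W z.2) (h : infoDensity PX W z < a) :
    W z.1 z.2 ≤ exp (n * a) * outDistX PX W z.2 := by
  rw [infoDensity, one_div, inv_mul_lt_iff₀ (by positivity),
    Real.log_lt_iff_lt_exp (div_pos hW hY), div_lt_iff₀ hY] at h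
  exact h.le

theorem prob_infoDensity_lt_le (hn : 0 < n) {PX : Word 𝒳 n → ℝ} {W : Word 𝒳 n → Word 𝒴 n → ℝ}
    (hX : IsPMF PX) (hW : ∀ x, IsPMF (W x)) (a : ℝ) :
    prob (jointXY PX W) {z | infoDensity PX W z < a} ≤
      prob (jointXY PX W) {z | W z.1 z.2 ≤ exp (n * a) * outDistX PX W z.2} := by
  refine (hX.jointXY hW).prob_mono_of_ne_zero fun z hz hne => ?_
  have hXpos : 0 < PX z.1 := (hX.nonneg _).lt_of_ne' (left_ne_zero_of_mul hne)
  have hWpos : 0 < W z.1 z.2 := ((hW _).nonneg _).lt_of_ne' (right_ne_zero_of_mul hne)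
  have hYpos : 0 < outDistX PX W z.2 := (mul_pos hXpos hWpos).trans_le (mul_le_outDistX hX hW _ _)
  exact le_exp_mul_of_infoDensity_lt hn hWpos hYpos hz

theorem prob_infoDensity_highEntropyInput_lt_le (hn : 0 < n) {PV : Word 𝒱 n → ℝ}
    {W : Word 𝒳 n → Word 𝒴 n → ℝ} (hV : IsPMF PV) (hW : ∀ x, IsPMF (W x))
    (φ : Word 𝒱 n → Word 𝒳 n) (ψ : Word 𝒴 n → Word 𝒱 n) {δ a b : ℝ} (hδ : 0 < δ)
    (hle : δ ≤ prob PV {v | b < entropyDensity PV v}) :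
    prob (jointXY (highEntropyInput b PV φ) W)
        {z | infoDensity (highEntropyInput b PV φ) W z < a} ≤
      δ⁻¹ * errProb PV W φ ψ + δ⁻¹ * exp (-(n * (b - a))) := by
  set S := {v | b < entropyDensity PV v}
  have hQ : IsPMF (condLaw PV S) := hV.condLaw S
  have hdom : ∀ v, condLaw PV S v ≤ δ⁻¹ * PV v := fun v =>
    (hV.condLaw_le hδ hle v).trans <| by
      gcongr
      exact Set.indicator_le_self' (fun v _ => hV.nonneg v) v
  have hbound : ∀ v, condLaw PV S v ≤ δ⁻¹ * exp (-(n * b)) := fun v =>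
    (hV.condLaw_le hδ hle v).trans <| by
      gcongr
      exact Set.indicator_le' (fun v hv => le_exp_of_lt_entropyDensity hn (hV.nonneg v) hv)
        (fun _ _ => (exp_pos _).le) v
  calc _ ≤ errProb (condLaw PV S) W φ ψ + δ⁻¹ * exp (-(n * b)) * exp (n * a) :=
        (prob_infoDensity_lt_le hn (hV.highEntropyInput b φ) hW a).trans
          (prob_jointXY_push_le_errProb_add hQ hW φ ψ (exp_pos _).le hbound)
    _ ≤ δ⁻¹ * errProb PV W φ ψ + δ⁻¹ * exp (-(n * b)) * exp (n * a) := by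
        gcongr
        exact errProb_le_mul_errProb hQ hV hW φ ψ hdom
    _ = δ⁻¹ * errProb PV W φ ψ + δ⁻¹ * exp (-(n * (b - a))) := by
        rw [mul_assoc, ← Real.exp_add]
        ring_nf

theorem Transmissible.exists_le_subseqIlow {PV : (n : ℕ) → Word 𝒱 n → ℝ}
    {W : (n : ℕ) → Word 𝒳 n → Word 𝒴 n → ℝ} (htrans : Transmissible PV W)
    (hPV : ∀ n, IsPMF (PV n)) (hW : ∀ n x, IsPMF (W n x)) {a : ℝ} (ha : a < Hbar PV) :
    ∃ PX : (n : ℕ) → Word 𝒳 n → ℝ, (∀ n, IsPMF (PX n)) ∧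
      ∃ ns : ℕ → ℕ, StrictMono ns ∧ 0 < ns 0 ∧ a ≤ subseqIlow PX W ns := by
  obtain ⟨φ, ψ, herr⟩ := htrans
  obtain ⟨b, hab, hb⟩ := EReal.lt_iff_exists_real_btwn.1 ha
  obtain ⟨δ, hδ, ns, hns, hns₀, hle⟩ := exists_strictMono_le_prob_of_lt_plimsup hPV hb
  have hPX : ∀ n, IsPMF (highEntropyInput b (PV n) (φ n)) := fun n =>
    (hPV n).highEntropyInput b (φ n)
  refine ⟨_, hPX, ns, hns, hns₀, coe_le_pliminf <| squeeze_zero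
    (fun i => prob_nonneg ((hPX _).jointXY (hW _)).nonneg _)
    (fun i => prob_infoDensity_highEntropyInput_lt_le (hns₀.trans_le (hns.monotone i.zero_le))
      (hPV _) (hW _) (φ _) (ψ _) hδ (hle i)) ?_⟩
  have hexp : Tendsto (fun i => exp (-(ns i * (b - a)))) atTop (𝓝 0) :=
    tendsto_exp_neg_atTop_nhds_zero.comp <|
      (tendsto_natCast_atTop_atTop.comp hns.tendsto_atTop).atTop_mul_const
        (sub_pos.2 (EReal.coe_lt_coe_iff.1 hab))
  simpa using ((herr.comp hns.tendsto_atTop).const_mul δ⁻¹).add (hexp.const_mul δ⁻¹)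

end Converse

theorem separation_converse_channel_semi_strong_converse_general
    {𝒱 𝒳 𝒴 : Type*} {PV : (n : ℕ) → Word 𝒱 n → ℝ} (hPV : ∀ n, IsPMF (PV n))
    {W : (n : ℕ) → Word 𝒳 n → Word 𝒴 n → ℝ} (hW : ∀ n x, IsPMF (W n x))
    (htrans : Transmissible PV W) :
    Hbar PV ≤ ⨆ (PX : {PX : (n : ℕ) → Word 𝒳 n → ℝ // ∀ n, IsPMF (PX n)})
      (ns : {ns : ℕ → ℕ // StrictMono ns ∧ 0 < ns 0}), subseqIlow PX.1 W ns.1 := by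
  refine EReal.ge_of_forall_gt_iff_ge.1 fun a ha => ?_
  obtain ⟨PX, hPX, ns, hns, hns₀, hle⟩ := htrans.exists_le_subseqIlow hPV hW ha
  exact le_iSup₂_of_le ⟨PX, hPX⟩ ⟨ns, hns, hns₀⟩ hle

/-- **Separation theorem, converse part under the channel semi-strong converse property**
(Theorem 6.7, part 2, channel version, spectral form). -/
theorem separation_converse_channel_semi_strong_converse
    {𝒱 𝒳 𝒴 : Type} [Countable 𝒱] [Countable 𝒳] [Countable 𝒴]
    (PV : (n : ℕ) → Word 𝒱 n → ℝ) (hPV : ∀ n, IsPMF (PV n))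
    (W : (n : ℕ) → Word 𝒳 n → Word 𝒴 n → ℝ) (hW : ∀ n x, IsPMF (W n x))
    (hssc : ∀ PX : (n : ℕ) → Word 𝒳 n → ℝ, (∀ n, IsPMF (PX n)) →
      ∀ ns : ℕ → ℕ, StrictMono ns → 0 < ns 0 →
        pliminf (fun i => jointXY (PX (ns i)) (W (ns i)))
          (fun i z => (1 / (ns i : ℝ)) *
            Real.log (W (ns i) z.1 z.2 / outDistX (PX (ns i)) (W (ns i)) z.2)) ≤
          supIlow W)
    (htrans : Transmissible PV W) :
    Hbar PV ≤ supIlow W :=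
  (separation_converse_channel_semi_strong_converse_general hPV hW htrans).trans <|
    iSup₂_le fun PX ns => hssc PX.1 PX.2 ns.1 ns.2.1 ns.2.2

end ISC
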